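/- arXiv:1904.08299 — 4 statements merged into one kernel-verified Lean document; each statement's English description precedes it below -/
import Mathlib

section
/- Let α, a, b, c, x₁, x₂ be real numbers with ρ := √(x₁² + x₂²) > 0, and let M = M(α,a,b,c,x₁,x₂) be the meridional EFG tensor. Then for every λ ∈ ℝ, det(λ·I₃ − M) = (λ − a/ρ)·(λ² − (α−1)·(a/ρ)·λ + (α−1)·(a/ρ)·c − b² − c²). Consequently the eigenvalues of M are exactly λ₀ = a/ρ and λ₁,₂ = (α−1)·a/(2ρ) ± √( ((α−1)·a/(2ρ))² − (α−1)·(a/ρ)·c + b² + c² ), where the quantity under the square root equals ((α−1)·a/(2ρ) − c)² + b² and is therefore nonnegative. -/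
/-- The meridional EFG (electric field gradient) tensor, with `a = E_ρ`,
`b = ∂E_ρ/∂x₀`, `c = ∂E_ρ/∂ρ`, `ρ = √(x₁² + x₂²)`. -/
noncomputable def meridionalEFG (α a b c x₁ x₂ : ℝ) : Matrix (Fin 3) (Fin 3) ℝ :=
  let ρ := Real.sqrt (x₁ ^ 2 + x₂ ^ 2)
  !![-c + (α - 1) * a / ρ, b * x₁ / ρ, b * x₂ / ρ;
     b * x₁ / ρ, c * x₁ ^ 2 / ρ ^ 2 + (a / ρ) * x₂ ^ 2 / ρ ^ 2, (c - a / ρ) * x₁ * x₂ / ρ ^ 2;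
     b * x₂ / ρ, (c - a / ρ) * x₁ * x₂ / ρ ^ 2, c * x₂ ^ 2 / ρ ^ 2 + (a / ρ) * x₁ ^ 2 / ρ ^ 2]

/-!
At a point of azimuth `θ`, put `(u, v) = (x₁ / ρ, x₂ / ρ) = (cos θ, sin θ)`. In the
orthonormal frame `e₀`, `e_ρ = (0, u, v)`, `e_θ = (0, -v, u)` the tensor no longer depends on `θ`
and splits into a symmetric `2 × 2` block on `span {e₀, e_ρ}`, of trace `(α - 1) a / ρ` and
determinant `(α - 1) (a / ρ) c - b² - c²`, and the eigenvalue `a / ρ` on `e_θ`.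
-/

section MeridionalEFG

open Matrix

variable {R : Type*} [CommRing R]

theorem det_smul_one_sub_conj_of_mul_eq_one {m n : Type*} [Fintype m] [Fintype n]
    [DecidableEq m] [DecidableEq n] {P : Matrix m n R} {Q : Matrix n m R}
    (hPQ : P * Q = 1) (hQP : Q * P = 1) (B : Matrix n n R) (t : R) :
    (t • (1 : Matrix m m R) - P * B * Q).det = (t • (1 : Matrix n n R) - B).det := by
  have hconj : t • (1 : Matrix m m R) - P * B * Q = P * (t • (1 : Matrix n n R) - B) * Q := by
    rw [Matrix.mul_sub, Matrix.sub_mul, Matrix.mul_smul, Matrix.mul_one, Matrix.smul_mul, hPQ]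
  rw [hconj, det_conj_of_mul_eq_one hPQ hQP]

theorem sq_sub_two_mul_add_eq_zero_iff [NoZeroDivisors R] {m q s : R} (hs : s ^ 2 = m ^ 2 - q)
    (x : R) : x ^ 2 - 2 * m * x + q = 0 ↔ x = m + s ∨ x = m - s := by
  have hfactor : x ^ 2 - 2 * m * x + q = (x - (m + s)) * (x - (m - s)) := by
    linear_combination hs
  rw [hfactor, mul_eq_zero, sub_eq_zero, sub_eq_zero]

theorem div_sqrt_sq_add_sq_eq_one {x y : ℝ} (h : 0 < √(x ^ 2 + y ^ 2)) :
    (x / √(x ^ 2 + y ^ 2)) ^ 2 + (y / √(x ^ 2 + y ^ 2)) ^ 2 = 1 := by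
  rw [div_pow, div_pow, ← add_div, Real.sq_sqrt (by positivity),
    div_self (Real.sqrt_pos.mp h).ne']

/-- The change of basis from the cylindrical frame to the Cartesian one: its columns are `e₀`,
`e_ρ = (0, u, v)` and `e_θ = (0, -v, u)`, where `(u, v)` stands for `(cos θ, sin θ)`. -/
def cylindricalFrame (u v : R) : Matrix (Fin 3) (Fin 3) R :=
  !![1, 0, 0; 0, u, -v; 0, v, u]

/-- The meridional EFG tensor in the cylindrical frame `e₀`, `e_ρ`, `e_θ`, where `k` stands for
`E_ρ / ρ`. -/
def cylindricalEFG (α k b c : R) : Matrix (Fin 3) (Fin 3) R :=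
  !![-c + (α - 1) * k, b, 0; b, c, 0; 0, 0, k]

theorem transpose_cylindricalFrame (u v : R) :
    (cylindricalFrame u v)ᵀ = !![1, 0, 0; 0, u, v; 0, -v, u] :=
  eta_fin_three _

theorem cylindricalFrame_mul_transpose {u v : R} (h : u ^ 2 + v ^ 2 = 1) :
    cylindricalFrame u v * (cylindricalFrame u v)ᵀ = 1 :=
  calc cylindricalFrame u v * (cylindricalFrame u v)ᵀ
    _ = !![1, 0, 0; 0, u ^ 2 + v ^ 2, 0; 0, 0, u ^ 2 + v ^ 2] := by
      rw [transpose_cylindricalFrame, cylindricalFrame, mul_fin_three]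
      ring_nf
    _ = 1 := by rw [h, one_fin_three]

theorem cylindricalEFG_conj_cylindricalFrame (α k b c u v : R) :
    cylindricalFrame u v * cylindricalEFG α k b c * (cylindricalFrame u v)ᵀ =
      !![-c + (α - 1) * k, b * u, b * v;
         b * u, c * u ^ 2 + k * v ^ 2, (c - k) * u * v;
         b * v, (c - k) * u * v, c * v ^ 2 + k * u ^ 2] := by
  rw [transpose_cylindricalFrame, cylindricalFrame, cylindricalEFG, mul_fin_three, mul_fin_three]
  ring_nf

theorem det_smul_one_sub_cylindricalEFG (α k b c t : R) :
    (t • (1 : Matrix (Fin 3) (Fin 3) R) - cylindricalEFG α k b c).det =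
      (t - k) * (t ^ 2 - (α - 1) * k * t + (α - 1) * k * c - b ^ 2 - c ^ 2) := by
  simp only [cylindricalEFG, det_fin_three, Matrix.sub_apply, Matrix.smul_apply, one_fin_three,
    of_apply, cons_val, smul_eq_mul]
  ring

theorem meridionalEFG_eq_conj_cylindricalFrame (α a b c x₁ x₂ : ℝ) :
    meridionalEFG α a b c x₁ x₂ =
      cylindricalFrame (x₁ / √(x₁ ^ 2 + x₂ ^ 2)) (x₂ / √(x₁ ^ 2 + x₂ ^ 2)) *
        cylindricalEFG α (a / √(x₁ ^ 2 + x₂ ^ 2)) b c *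
        (cylindricalFrame (x₁ / √(x₁ ^ 2 + x₂ ^ 2)) (x₂ / √(x₁ ^ 2 + x₂ ^ 2)))ᵀ := by
  rw [cylindricalEFG_conj_cylindricalFrame, meridionalEFG]
  ring_nf

theorem det_smul_one_sub_meridionalEFG {x₁ x₂ : ℝ} (hρ : 0 < √(x₁ ^ 2 + x₂ ^ 2))
    (α a b c t : ℝ) :
    (t • (1 : Matrix (Fin 3) (Fin 3) ℝ) - meridionalEFG α a b c x₁ x₂).det =
      (t - a / √(x₁ ^ 2 + x₂ ^ 2)) *
        (t ^ 2 - (α - 1) * (a / √(x₁ ^ 2 + x₂ ^ 2)) * t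
          + (α - 1) * (a / √(x₁ ^ 2 + x₂ ^ 2)) * c - b ^ 2 - c ^ 2) := by
  have hframe := cylindricalFrame_mul_transpose (div_sqrt_sq_add_sq_eq_one hρ)
  rw [meridionalEFG_eq_conj_cylindricalFrame,
    det_smul_one_sub_conj_of_mul_eq_one hframe (mul_eq_one_comm.mp hframe),
    det_smul_one_sub_cylindricalEFG]

end MeridionalEFG

/-- roots of the characteristic equation of the meridional EFG tensor. -/
theorem meridionalEFG_char_roots
    (α a b c x₁ x₂ : ℝ) (hρ : 0 < Real.sqrt (x₁ ^ 2 + x₂ ^ 2)) :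
    (∀ lam : ℝ,
        (lam • (1 : Matrix (Fin 3) (Fin 3) ℝ) - meridionalEFG α a b c x₁ x₂).det =
          (lam - a / Real.sqrt (x₁ ^ 2 + x₂ ^ 2)) *
            (lam ^ 2 - (α - 1) * (a / Real.sqrt (x₁ ^ 2 + x₂ ^ 2)) * lam
              + (α - 1) * (a / Real.sqrt (x₁ ^ 2 + x₂ ^ 2)) * c - b ^ 2 - c ^ 2)) ∧
    (((α - 1) * a / (2 * Real.sqrt (x₁ ^ 2 + x₂ ^ 2))) ^ 2
        - (α - 1) * (a / Real.sqrt (x₁ ^ 2 + x₂ ^ 2)) * c + b ^ 2 + c ^ 2 =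
      ((α - 1) * a / (2 * Real.sqrt (x₁ ^ 2 + x₂ ^ 2)) - c) ^ 2 + b ^ 2) ∧
    (0 ≤ ((α - 1) * a / (2 * Real.sqrt (x₁ ^ 2 + x₂ ^ 2))) ^ 2
        - (α - 1) * (a / Real.sqrt (x₁ ^ 2 + x₂ ^ 2)) * c + b ^ 2 + c ^ 2) ∧
    (∀ lam : ℝ,
        (lam • (1 : Matrix (Fin 3) (Fin 3) ℝ) - meridionalEFG α a b c x₁ x₂).det = 0 ↔
          lam = a / Real.sqrt (x₁ ^ 2 + x₂ ^ 2) ∨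
          lam = (α - 1) * a / (2 * Real.sqrt (x₁ ^ 2 + x₂ ^ 2))
              + Real.sqrt (((α - 1) * a / (2 * Real.sqrt (x₁ ^ 2 + x₂ ^ 2))) ^ 2
                  - (α - 1) * (a / Real.sqrt (x₁ ^ 2 + x₂ ^ 2)) * c + b ^ 2 + c ^ 2) ∨
          lam = (α - 1) * a / (2 * Real.sqrt (x₁ ^ 2 + x₂ ^ 2))
              - Real.sqrt (((α - 1) * a / (2 * Real.sqrt (x₁ ^ 2 + x₂ ^ 2))) ^ 2
                  - (α - 1) * (a / Real.sqrt (x₁ ^ 2 + x₂ ^ 2)) * c + b ^ 2 + c ^ 2)) := by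
  have htrace : (α - 1) * (a / √(x₁ ^ 2 + x₂ ^ 2)) =
      2 * ((α - 1) * a / (2 * √(x₁ ^ 2 + x₂ ^ 2))) := by ring
  have hdet := det_smul_one_sub_meridionalEFG hρ α a b c
  rw [htrace] at hdet ⊢
  set m := (α - 1) * a / (2 * √(x₁ ^ 2 + x₂ ^ 2))
  have hdisc : m ^ 2 - 2 * m * c + b ^ 2 + c ^ 2 = (m - c) ^ 2 + b ^ 2 := by ring
  have hdisc_nonneg : 0 ≤ m ^ 2 - 2 * m * c + b ^ 2 + c ^ 2 := by
    rw [hdisc]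
    positivity
  refine ⟨hdet, hdisc, hdisc_nonneg, fun t ↦ ?_⟩
  have hsqrt_sq : √(m ^ 2 - 2 * m * c + b ^ 2 + c ^ 2) ^ 2 =
      m ^ 2 - (2 * m * c - b ^ 2 - c ^ 2) := by
    rw [Real.sq_sqrt hdisc_nonneg]
    ring
  rw [hdet, mul_eq_zero, sub_eq_zero, ← sq_sub_two_mul_add_eq_zero_iff hsqrt_sq,
    ← add_sub_assoc, ← add_sub_assoc]
end

section
/- Let a, b, c, x₁, x₂ be real numbers with ρ := √(x₁² + x₂²) > 0, and let M = M(0,a,b,c,x₁,x₂) be the meridional EFG tensor with parameter α = 0. Then trace(M) = 0, so the characteristic equation has the incomplete cubic form λ³ + II·λ − III = 0 with II = −(b² + c²) − (a/ρ)·c − (a/ρ)² and III = −(a/ρ)·(b² + c²) − (a/ρ)²·c; and the eigenvalues of M are exactly λ₀ = a/ρ and λ₁,₂ = −a/(2ρ) ± √( (a/(2ρ))² + (a/ρ)·c + b² + c² ). -/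
/-!
In the orthonormal frame made of the axial, radial and azimuthal directions, the tensor splits
into the symmetric block `!![-c + (α - 1) a / ρ, b; b, c]` on the meridional half-plane and the
single azimuthal entry `a / ρ`. One eigenvalue is therefore `a / ρ`, and the other two are the
roots of the quadratic characteristic polynomial of the block.
-/

section

open Matrix Polynomial

section CommRing

variable {R : Type*} [CommRing R]

theorem det_smul_one_sub {n : Type*} [Fintype n] [DecidableEq n] (M : Matrix n n R) (t : R) :
    (t • (1 : Matrix n n R) - M).det = M.charpoly.eval t := by
  rw [eval_charpoly, scalar_apply, smul_one_eq_diagonal]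

theorem charpoly_block_two_one (p q r s t : R) :
    !![p, q, 0; r, s, 0; 0, 0, t].charpoly = !![p, q; r, s].charpoly * (X - C t) := by
  have block_form : !![p, q, 0; r, s, 0; 0, 0, t] = reindex finSumFinEquiv finSumFinEquiv
      (fromBlocks !![p, q; r, s] 0 0 (diagonal fun _ : Fin 1 ↦ t)) := by
    ext i j
    fin_cases i <;> fin_cases j <;> rfl
  rw [block_form, charpoly_reindex, charpoly_fromBlocks_zero₁₂, charpoly_diagonal,
    Fin.prod_univ_one]

theorem eval_charpoly_fin_two_of (p q r s t : R) :
    !![p, q; r, s].charpoly.eval t = (t - p) * (t - s) - q * r := by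
  simp [eval_charpoly, det_fin_two]

/-- The orthonormal frame of a meridional field at a point lying in the direction `(u, v)` from
the axis of symmetry: its columns are the axial, radial and azimuthal unit vectors. -/
def meridionalFrame (u v : R) : Matrix (Fin 3) (Fin 3) R :=
  !![1, 0, 0; 0, u, -v; 0, v, u]

theorem transpose_meridionalFrame (u v : R) :
    (meridionalFrame u v)ᵀ = !![1, 0, 0; 0, u, v; 0, -v, u] :=
  (etaExpand_eq _).symm

theorem transpose_meridionalFrame_mul_self {u v : R} (huv : u ^ 2 + v ^ 2 = 1) :
    (meridionalFrame u v)ᵀ * meridionalFrame u v = 1 := by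
  rw [transpose_meridionalFrame, meridionalFrame, mul_fin_three, one_fin_three]
  congr! <;> grind

end CommRing

theorem isRoot_charpoly_symm_fin_two_iff (p b q t : ℝ) :
    !![p, b; b, q].charpoly.IsRoot t ↔
      t = (p + q) / 2 + √(((p - q) / 2) ^ 2 + b ^ 2) ∨
        t = (p + q) / 2 - √(((p - q) / 2) ^ 2 + b ^ 2) := by
  set s := √(((p - q) / 2) ^ 2 + b ^ 2)
  have hs : s ^ 2 = ((p - q) / 2) ^ 2 + b ^ 2 := Real.sq_sqrt (by positivity)
  have factorization : (t - p) * (t - q) - b * b =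
      (t - ((p + q) / 2 + s)) * (t - ((p + q) / 2 - s)) := by
    linear_combination hs
  rw [IsRoot.def, eval_charpoly_fin_two_of, factorization, mul_eq_zero, sub_eq_zero, sub_eq_zero]

theorem div_sqrt_sq_add_div_sqrt_sq {x y : ℝ} (h : x ^ 2 + y ^ 2 ≠ 0) :
    (x / √(x ^ 2 + y ^ 2)) ^ 2 + (y / √(x ^ 2 + y ^ 2)) ^ 2 = 1 := by
  rw [div_pow, div_pow, ← add_div, Real.sq_sqrt (by positivity), div_self h]

theorem meridionalEFG_eq_conj (α a b c x₁ x₂ : ℝ) :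
    let ρ := √(x₁ ^ 2 + x₂ ^ 2)
    let Q := meridionalFrame (x₁ / ρ) (x₂ / ρ)
    meridionalEFG α a b c x₁ x₂ =
      Q * !![-c + (α - 1) * (a / ρ), b, 0; b, c, 0; 0, 0, a / ρ] * Qᵀ := by
  simp only [transpose_meridionalFrame]
  simp only [meridionalEFG, meridionalFrame, mul_fin_three]
  ring_nf

theorem trace_meridionalEFG (α a b c : ℝ) {x₁ x₂ : ℝ} (hx : x₁ ^ 2 + x₂ ^ 2 ≠ 0) :
    (meridionalEFG α a b c x₁ x₂).trace = α * (a / √(x₁ ^ 2 + x₂ ^ 2)) := by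
  have hQ := transpose_meridionalFrame_mul_self (div_sqrt_sq_add_div_sqrt_sq hx)
  rw [meridionalEFG_eq_conj, trace_mul_comm, ← mul_assoc, hQ, one_mul, trace_fin_three_of]
  ring

theorem charpoly_meridionalEFG (α a b c : ℝ) {x₁ x₂ : ℝ} (hx : x₁ ^ 2 + x₂ ^ 2 ≠ 0) :
    (meridionalEFG α a b c x₁ x₂).charpoly =
      !![-c + (α - 1) * (a / √(x₁ ^ 2 + x₂ ^ 2)), b; b, c].charpoly *
        (X - C (a / √(x₁ ^ 2 + x₂ ^ 2))) := by
  have hQ := transpose_meridionalFrame_mul_self (div_sqrt_sq_add_div_sqrt_sq hx)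
  rw [meridionalEFG_eq_conj, charpoly_mul_comm, ← mul_assoc, hQ, one_mul,
    charpoly_block_two_one]

theorem meridionalEFG_alpha_zero_general
    (α a b c x₁ x₂ : ℝ) (hρ : 0 < √(x₁ ^ 2 + x₂ ^ 2)) :
    (meridionalEFG α a b c x₁ x₂).trace = α * (a / √(x₁ ^ 2 + x₂ ^ 2)) ∧
    (∀ lam : ℝ,
        (lam • (1 : Matrix (Fin 3) (Fin 3) ℝ) - meridionalEFG α a b c x₁ x₂).det =
          lam ^ 3 - α * (a / √(x₁ ^ 2 + x₂ ^ 2)) * lam ^ 2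
            + (-(b ^ 2 + c ^ 2) - (1 - α) * (a / √(x₁ ^ 2 + x₂ ^ 2)) * c
                - (1 - α) * (a / √(x₁ ^ 2 + x₂ ^ 2)) ^ 2) * lam
            - (-(a / √(x₁ ^ 2 + x₂ ^ 2)) * (b ^ 2 + c ^ 2)
                - (1 - α) * (a / √(x₁ ^ 2 + x₂ ^ 2)) ^ 2 * c)) ∧
    (∀ lam : ℝ,
        (lam • (1 : Matrix (Fin 3) (Fin 3) ℝ) - meridionalEFG α a b c x₁ x₂).det = 0 ↔
          lam = a / √(x₁ ^ 2 + x₂ ^ 2) ∨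
          lam = (α - 1) * (a / (2 * √(x₁ ^ 2 + x₂ ^ 2)))
              + √(((α - 1) * (a / (2 * √(x₁ ^ 2 + x₂ ^ 2)))) ^ 2
                  + (1 - α) * (a / √(x₁ ^ 2 + x₂ ^ 2)) * c + b ^ 2 + c ^ 2) ∨
          lam = (α - 1) * (a / (2 * √(x₁ ^ 2 + x₂ ^ 2)))
              - √(((α - 1) * (a / (2 * √(x₁ ^ 2 + x₂ ^ 2)))) ^ 2
                  + (1 - α) * (a / √(x₁ ^ 2 + x₂ ^ 2)) * c + b ^ 2 + c ^ 2)) := by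
  have hx : x₁ ^ 2 + x₂ ^ 2 ≠ 0 := (Real.sqrt_pos.mp hρ).ne'
  simp only [det_smul_one_sub, charpoly_meridionalEFG α a b c hx]
  refine ⟨trace_meridionalEFG α a b c hx, fun lam ↦ ?_, fun lam ↦ ?_⟩
  · rw [eval_mul, eval_charpoly_fin_two_of, eval_sub, eval_X, eval_C]
    ring
  · rw [← IsRoot.def, root_mul, isRoot_charpoly_symm_fin_two_iff, root_X_sub_C, or_comm,
      eq_comm (b := lam)]
    ring_nf

end

/-- the case α = 0 (homogeneous media): trace vanishes, the
characteristic equation takes the incomplete cubic form, and the eigenvalues. -/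
theorem meridionalEFG_alpha_zero
    (a b c x₁ x₂ : ℝ) (hρ : 0 < Real.sqrt (x₁ ^ 2 + x₂ ^ 2)) :
    (meridionalEFG 0 a b c x₁ x₂).trace = 0 ∧
    (∀ lam : ℝ,
        (lam • (1 : Matrix (Fin 3) (Fin 3) ℝ) - meridionalEFG 0 a b c x₁ x₂).det =
          lam ^ 3
            + (-(b ^ 2 + c ^ 2) - (a / Real.sqrt (x₁ ^ 2 + x₂ ^ 2)) * c
                - (a / Real.sqrt (x₁ ^ 2 + x₂ ^ 2)) ^ 2) * lam
            - (-(a / Real.sqrt (x₁ ^ 2 + x₂ ^ 2)) * (b ^ 2 + c ^ 2)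
                - (a / Real.sqrt (x₁ ^ 2 + x₂ ^ 2)) ^ 2 * c)) ∧
    (∀ lam : ℝ,
        (lam • (1 : Matrix (Fin 3) (Fin 3) ℝ) - meridionalEFG 0 a b c x₁ x₂).det = 0 ↔
          lam = a / Real.sqrt (x₁ ^ 2 + x₂ ^ 2) ∨
          lam = -(a / (2 * Real.sqrt (x₁ ^ 2 + x₂ ^ 2)))
              + Real.sqrt ((a / (2 * Real.sqrt (x₁ ^ 2 + x₂ ^ 2))) ^ 2
                  + (a / Real.sqrt (x₁ ^ 2 + x₂ ^ 2)) * c + b ^ 2 + c ^ 2) ∨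
          lam = -(a / (2 * Real.sqrt (x₁ ^ 2 + x₂ ^ 2)))
              - Real.sqrt ((a / (2 * Real.sqrt (x₁ ^ 2 + x₂ ^ 2))) ^ 2
                  + (a / Real.sqrt (x₁ ^ 2 + x₂ ^ 2)) * c + b ^ 2 + c ^ 2)) := by
  simpa using meridionalEFG_alpha_zero_general 0 a b c x₁ x₂ hρ
end

section
/- Let α, λ̆ ∈ ℝ. Let s : ℝ → ℝ be twice continuously differentiable with s''(x₁) + λ̆²·s(x₁) = 0 for all x₁, and let g : ℝ × (0,∞) → ℝ be twice continuously differentiable with ∂²g/∂x₀² + ∂²g/∂x₂² − (α/x₂)·∂g/∂x₂ − λ̆²·g = 0 for all (x₀, x₂) with x₂ > 0. Then the function h(x₀, x₁, x₂) := g(x₀, x₂)·s(x₁) satisfies the Weinstein equation x₂·Δh − α·∂h/∂x₂ = 0 at every point with x₂ > 0. -/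
/-! On each coordinate line one factor of `g x₀ x₂ * s x₁` is constant and comes out of the
derivatives, so the Weinstein operator sends the product to `x₂ (s · L g + g · s'')`, where `L` acts
in `(x₀, x₂)` alone. If `L g = μ g` and `s'' = -μ s`, the two terms cancel. -/

section Operators

variable {𝕜 : Type*} [NontriviallyNormedField 𝕜]

/-- The Weinstein operator `x₂ Δ h - α ∂h/∂x₂`, with which the Weinstein equation is stated. The
function is curried and each partial derivative is the `deriv` of a one-variable slice. -/
noncomputable def weinsteinOperator (α : 𝕜) (h : 𝕜 → 𝕜 → 𝕜 → 𝕜) (x₀ x₁ x₂ : 𝕜) : 𝕜 :=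
  x₂ * (deriv (deriv fun t => h t x₁ x₂) x₀ + deriv (deriv fun t => h x₀ t x₂) x₁
      + deriv (deriv fun t => h x₀ x₁ t) x₂)
    - α * deriv (fun t => h x₀ x₁ t) x₂

/-- The operator `∂²g/∂x₀² + ∂²g/∂x₂² - (α/x₂) ∂g/∂x₂` in the two variables that remain once `x₁`
is separated. It is the Weinstein operator divided by `x₂`, hence meaningful only for `x₂ ≠ 0`. -/
noncomputable def planarWeinsteinOperator (α : 𝕜) (g : 𝕜 → 𝕜 → 𝕜) (x₀ x₂ : 𝕜) : 𝕜 :=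
  deriv (deriv fun t => g t x₂) x₀ + deriv (deriv fun t => g x₀ t) x₂
    - α / x₂ * deriv (fun t => g x₀ t) x₂

theorem weinsteinOperator_mul_separated (α : 𝕜) (g : 𝕜 → 𝕜 → 𝕜) (s : 𝕜 → 𝕜) (x₀ x₁ : 𝕜) {x₂ : 𝕜}
    (hx₂ : x₂ ≠ 0) :
    weinsteinOperator α (fun y₀ y₁ y₂ => g y₀ y₂ * s y₁) x₀ x₁ x₂ =
      x₂ * (planarWeinsteinOperator α g x₀ x₂ * s x₁ + g x₀ x₂ * deriv (deriv s) x₁) := by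
  simp only [weinsteinOperator, planarWeinsteinOperator, deriv_mul_const_field',
    deriv_const_mul_field']
  field_simp
  ring

end Operators

theorem contDiffOn_mul_separated {𝕜 E F G A : Type*} [NontriviallyNormedField 𝕜]
    [NormedAddCommGroup E] [NormedSpace 𝕜 E] [NormedAddCommGroup F] [NormedSpace 𝕜 F]
    [NormedAddCommGroup G] [NormedSpace 𝕜 G] [NormedRing A] [NormedAlgebra 𝕜 A]
    {n : WithTop ℕ∞} {g : E → G → A} {s : F → A} {U : Set (E × G)}
    (hg : ContDiffOn 𝕜 n (fun q : E × G => g q.1 q.2) U) (hs : ContDiff 𝕜 n s) :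
    ContDiffOn 𝕜 n (fun q : E × F × G => g q.1 q.2.2 * s q.2.1) {q | (q.1, q.2.2) ∈ U} := by
  have hproj : ContDiff 𝕜 n fun q : E × F × G => (q.1, q.2.2) := by fun_prop
  have hs' : ContDiff 𝕜 n fun q : E × F × G => s q.2.1 := by fun_prop
  exact (hg.comp hproj.contDiffOn fun _ hq => hq).mul hs'.contDiffOn

/-- An `α`-hyperbolic harmonic potential: a `C²` solution of the Weinstein equation on the
half-space `x₂ > 0`. The function is total; its values outside the half-space are irrelevant. -/
structure IsHyperbolicHarmonicPotential (α : ℝ) (h : ℝ → ℝ → ℝ → ℝ) : Prop where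
  contDiffOn : ContDiffOn ℝ 2 (fun q : ℝ × ℝ × ℝ => h q.1 q.2.1 q.2.2) {q | 0 < q.2.2}
  weinsteinOperator_eq_zero (x₀ x₁ x₂ : ℝ) (hx₂ : 0 < x₂) : weinsteinOperator α h x₀ x₁ x₂ = 0

theorem weinstein_separation_first_general {α μ : ℝ} {s : ℝ → ℝ} {g : ℝ → ℝ → ℝ}
    (hs2 : ContDiff ℝ 2 s) (hs : ∀ x₁, deriv (deriv s) x₁ + μ * s x₁ = 0)
    (hg2 : ContDiffOn ℝ 2 (fun q : ℝ × ℝ => g q.1 q.2) {q | 0 < q.2})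
    (hg : ∀ x₀ x₂, 0 < x₂ → planarWeinsteinOperator α g x₀ x₂ - μ * g x₀ x₂ = 0) :
    IsHyperbolicHarmonicPotential α fun x₀ x₁ x₂ => g x₀ x₂ * s x₁ where
  contDiffOn := contDiffOn_mul_separated hg2 hs2
  weinsteinOperator_eq_zero x₀ x₁ x₂ hx₂ := by
    rw [weinsteinOperator_mul_separated α g s x₀ x₁ hx₂.ne']
    linear_combination (x₂ * s x₁) * hg x₀ x₂ hx₂ + (x₂ * g x₀ x₂) * hs x₁

/-- first separation-of-variables step for the Weinstein equation
in Cartesian coordinates. -/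
theorem weinstein_separation_first
    (α lam : ℝ)
    (s : ℝ → ℝ) (hs2 : ContDiff ℝ 2 s)
    (hs : ∀ x₁ : ℝ, deriv (deriv s) x₁ + lam ^ 2 * s x₁ = 0)
    (g : ℝ → ℝ → ℝ)
    (hg2 : ContDiffOn ℝ 2 (fun q : ℝ × ℝ => g q.1 q.2) {q : ℝ × ℝ | 0 < q.2})
    (hg : ∀ x₀ x₂ : ℝ, 0 < x₂ →
        deriv (deriv (fun t => g t x₂)) x₀ + deriv (deriv (fun t => g x₀ t)) x₂
          - (α / x₂) * deriv (fun t => g x₀ t) x₂ - lam ^ 2 * g x₀ x₂ = 0) :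
    ∀ x₀ x₁ x₂ : ℝ, 0 < x₂ →
      x₂ * (deriv (deriv (fun t => g t x₂ * s x₁)) x₀
            + deriv (deriv (fun t => g x₀ x₂ * s t)) x₁
            + deriv (deriv (fun t => g x₀ t * s x₁)) x₂)
        - α * deriv (fun t => g x₀ t * s x₁) x₂ = 0 :=
  (weinstein_separation_first_general hs2 hs hg2 hg).weinsteinOperator_eq_zero
end

section
/- Let a₃, a₁ ∈ ℝ and (x₀,x₁,x₂) ∈ ℝ³ with ρ² := x₁² + x₂² > 0. Let M := a₃·M₁ + a₁·M₂, where M₁ := [[3x₀² − 3x₁² − 3x₂², −6x₀x₁, −6x₀x₂], [−6x₀x₁, −3x₀² + 3x₁² + x₂², 2x₁x₂], [−6x₀x₂, 2x₁x₂, −3x₀² + x₁² + 3x₂²]] and M₂ := diag(1, −1, −1). Then for every λ ∈ ℝ, det(λ·I₃ − M) = (λ − λ₀)·(λ² − D), where λ₀ = −3a₃x₀² + a₃ρ² − a₁ and D = (3a₃x₀² − 3a₃ρ² + a₁)² + 36a₃²x₀²ρ²; hence the eigenvalues of M are exactly λ₀ and ±√( (3a₃x₀² − 3a₃ρ² + a₁)²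 + 36a₃²x₀²ρ² ). -/
/-- First component of the EFG tensor of the cubic-polynomial Fueter potential. -/
def cubicEFG₁ (x₀ x₁ x₂ : ℝ) : Matrix (Fin 3) (Fin 3) ℝ :=
  !![3 * x₀ ^ 2 - 3 * x₁ ^ 2 - 3 * x₂ ^ 2, -6 * x₀ * x₁, -6 * x₀ * x₂;
     -6 * x₀ * x₁, -3 * x₀ ^ 2 + 3 * x₁ ^ 2 + x₂ ^ 2, 2 * x₁ * x₂;
     -6 * x₀ * x₂, 2 * x₁ * x₂, -3 * x₀ ^ 2 + x₁ ^ 2 + 3 * x₂ ^ 2]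

/-- Second component of the EFG tensor of the cubic-polynomial Fueter potential. -/
def cubicEFG₂ : Matrix (Fin 3) (Fin 3) ℝ :=
  !![1, 0, 0; 0, -1, 0; 0, 0, -1]

/-!
At a point off the `x₀`-axis, the tensor respects the splitting into the azimuthal direction
`(0, -x₂, x₁)` and the meridian plane spanned by `(1, 0, 0)` and `(0, x₁, x₂)`. The azimuthal
direction contributes the eigenvalue `λ₀`. In an orthonormal axial-radial frame, the meridian block
is symmetric and traceless, its axial and radial entries being opposite, so its characteristic
polynomial is `λ² - D` with `D` the sum of the squares of the axial and the off-diagonal entry.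
-/

theorem sq_eq_iff_eq_sqrt_or_eq_neg_sqrt {x d : ℝ} (hd : 0 ≤ d) :
    x ^ 2 = d ↔ x = Real.sqrt d ∨ x = -Real.sqrt d := by
  rw [← sq_eq_sq_iff_eq_or_eq_neg, Real.sq_sqrt hd]

section MeridionalTensor

variable {R : Type*} [CommRing R]

/-- The matrix of a symmetric tensor at a point with transverse coordinates `v = (y, z)` that is
invariant under reflection in the plane through that point and the first coordinate axis: in block
form `[p, q vᵀ; q v, s I + t v vᵀ]`. The coefficient `s` is the azimuthal eigenvalue. -/
def meridionalTensor (p q s t y z : R) : Matrix (Fin 3) (Fin 3) R :=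
  !![p, q * y, q * z;
     q * y, s + t * y ^ 2, t * y * z;
     q * z, t * y * z, s + t * z ^ 2]

theorem det_meridionalTensor (p q s t y z : R) :
    (meridionalTensor p q s t y z).det =
      s * (p * (s + t * (y ^ 2 + z ^ 2)) - q ^ 2 * (y ^ 2 + z ^ 2)) := by
  simp only [meridionalTensor, Matrix.det_fin_three, Matrix.of_apply, Matrix.cons_val]
  ring

theorem smul_one_sub_meridionalTensor (μ p q s t y z : R) :
    μ • (1 : Matrix (Fin 3) (Fin 3) R) - meridionalTensor p q s t y z =
      meridionalTensor (μ - p) (-q) (μ - s) (-t) y z := by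
  simp only [meridionalTensor, Matrix.one_fin_three, Matrix.smul_of, Matrix.of_sub_of,
    Matrix.smul_cons, Matrix.smul_empty, Matrix.cons_sub_cons, Matrix.empty_sub_empty, smul_eq_mul]
  ring_nf

end MeridionalTensor

theorem cubicEFG_eq_meridionalTensor (a₃ a₁ x₀ x₁ x₂ : ℝ) :
    a₃ • cubicEFG₁ x₀ x₁ x₂ + a₁ • cubicEFG₂ =
      meridionalTensor (3 * a₃ * x₀ ^ 2 - 3 * a₃ * (x₁ ^ 2 + x₂ ^ 2) + a₁) (-6 * a₃ * x₀)
        (-3 * a₃ * x₀ ^ 2 + a₃ * (x₁ ^ 2 + x₂ ^ 2) - a₁) (2 * a₃) x₁ x₂ := by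
  simp only [cubicEFG₁, cubicEFG₂, meridionalTensor, Matrix.smul_of, Matrix.of_add_of,
    Matrix.smul_cons, Matrix.smul_empty, Matrix.cons_add_cons, Matrix.empty_add_empty, smul_eq_mul]
  ring_nf

theorem det_smul_one_sub_cubicEFG (a₃ a₁ x₀ x₁ x₂ μ : ℝ) :
    (μ • (1 : Matrix (Fin 3) (Fin 3) ℝ) - (a₃ • cubicEFG₁ x₀ x₁ x₂ + a₁ • cubicEFG₂)).det =
      (μ - (-3 * a₃ * x₀ ^ 2 + a₃ * (x₁ ^ 2 + x₂ ^ 2) - a₁)) *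
        (μ ^ 2 - ((3 * a₃ * x₀ ^ 2 - 3 * a₃ * (x₁ ^ 2 + x₂ ^ 2) + a₁) ^ 2
          + 36 * a₃ ^ 2 * x₀ ^ 2 * (x₁ ^ 2 + x₂ ^ 2))) := by
  have radial_entry_eq :
      μ - (-3 * a₃ * x₀ ^ 2 + a₃ * (x₁ ^ 2 + x₂ ^ 2) - a₁) + -(2 * a₃) * (x₁ ^ 2 + x₂ ^ 2) =
        μ + (3 * a₃ * x₀ ^ 2 - 3 * a₃ * (x₁ ^ 2 + x₂ ^ 2) + a₁) := by ring
  rw [cubicEFG_eq_meridionalTensor, smul_one_sub_meridionalTensor, det_meridionalTensor,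
    radial_entry_eq]
  ring

/-- roots of the characteristic equation of the EFG tensor of the
meridional field of the reduced quaternionic cubic polynomial. -/
theorem cubicEFG_char_roots
    (a₃ a₁ x₀ x₁ x₂ : ℝ) (hρ : 0 < x₁ ^ 2 + x₂ ^ 2) :
    (∀ lam : ℝ,
        (lam • (1 : Matrix (Fin 3) (Fin 3) ℝ)
            - (a₃ • cubicEFG₁ x₀ x₁ x₂ + a₁ • cubicEFG₂)).det =
          (lam - (-3 * a₃ * x₀ ^ 2 + a₃ * (x₁ ^ 2 + x₂ ^ 2) - a₁)) *
            (lam ^ 2 - ((3 * a₃ * x₀ ^ 2 - 3 * a₃ * (x₁ ^ 2 + x₂ ^ 2) + a₁) ^ 2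
                + 36 * a₃ ^ 2 * x₀ ^ 2 * (x₁ ^ 2 + x₂ ^ 2)))) ∧
    (∀ lam : ℝ,
        (lam • (1 : Matrix (Fin 3) (Fin 3) ℝ)
            - (a₃ • cubicEFG₁ x₀ x₁ x₂ + a₁ • cubicEFG₂)).det = 0 ↔
          lam = -3 * a₃ * x₀ ^ 2 + a₃ * (x₁ ^ 2 + x₂ ^ 2) - a₁ ∨
          lam = Real.sqrt ((3 * a₃ * x₀ ^ 2 - 3 * a₃ * (x₁ ^ 2 + x₂ ^ 2) + a₁) ^ 2
                + 36 * a₃ ^ 2 * x₀ ^ 2 * (x₁ ^ 2 + x₂ ^ 2)) ∨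
          lam = -Real.sqrt ((3 * a₃ * x₀ ^ 2 - 3 * a₃ * (x₁ ^ 2 + x₂ ^ 2) + a₁) ^ 2
                + 36 * a₃ ^ 2 * x₀ ^ 2 * (x₁ ^ 2 + x₂ ^ 2))) := by
  refine ⟨det_smul_one_sub_cubicEFG a₃ a₁ x₀ x₁ x₂, fun lam => ?_⟩
  have discr_nonneg : 0 ≤ (3 * a₃ * x₀ ^ 2 - 3 * a₃ * (x₁ ^ 2 + x₂ ^ 2) + a₁) ^ 2
      + 36 * a₃ ^ 2 * x₀ ^ 2 * (x₁ ^ 2 + x₂ ^ 2) := by positivity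
  rw [det_smul_one_sub_cubicEFG, mul_eq_zero, sub_eq_zero, sub_eq_zero,
    sq_eq_iff_eq_sqrt_or_eq_neg_sqrt discr_nonneg]
end
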